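/- (Convergence to Energetic solutions as μ ↓ 0.) Assume the energy functional E satisfies conditions (E1), (E2) and (E3). Let (uₙ⁰) ⊂ X and u₀ ∈ X satisfy uₙ⁰ → u₀ and E(0,uₙ⁰) → E(0,u₀), and suppose u₀ is stable at t = 0, i.e. E(0,u₀) ≤ E(0,v) + d(u₀,v) for all v ∈ X. Let (μₙ) ⊂ (0,∞) be a null sequence and let uₙ be a VE_{μₙ} solution of (X,E,d) with uₙ(0) = uₙ⁰ for each n. Then there exist a subsequence (u_{n_k}) and a curve u ∈ BV([0,T];X) with u(0) = u₀ such that u_{n_k}(t) → u(t) and E(t,u_{n_k}(t)) → E(t,u(t)) for every t ∈ [0,T], and u is an Energetic solution of (X,E,d). -/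

import Mathlib

open Filter MeasureTheory Topology Set
open scoped ENNReal

noncomputable section

variable {X : Type*} [MetricSpace X]

/-- Pointwise total variation of `u : ℝ → X` on a set `S ⊆ ℝ` (with value in `ℝ≥0∞`),
defined as the supremum over finite increasing families of points of `S` of the sums of the
consecutive distances. -/
def varD (u : ℝ → X) (S : Set ℝ) : ℝ≥0∞ :=
  ⨆ (M : ℕ) (t : ℕ → ℝ)
    (_ : (∀ j, j ≤ M → t j ∈ S) ∧ ∀ j, j < M → t j < t (j + 1)),
    ∑ j ∈ Finset.range M, edist (u (t j)) (u (t (j + 1)))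

/-- Left limit of `u` at `t`, with the convention that it equals `u 0` for `t ≤ 0`
(curves are thought of as being defined on `[0,T]`). -/
def lLim (u : ℝ → X) (t : ℝ) : X :=
  if t ≤ 0 then u 0 else Function.leftLim u t

/-- Right limit of `u : [0,T] → X` at `t`, with the convention that it equals `u T` for
`t ≥ T`. -/
def rLim (u : ℝ → X) (T t : ℝ) : X :=
  if T ≤ t then u T else Function.rightLim u t

/-- The jump set of a curve `u : [0,T] → X`. -/
def jumpSet (u : ℝ → X) (T : ℝ) : Set ℝ :=
  {t | t ∈ Icc 0 T ∧ (lLim u t ≠ u t ∨ rLim u T t ≠ u t)}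

/-- The metric slope `|DE|(t,u)` of the energy functional `E`. -/
def slopeE (E : ℝ → X → ℝ) (t : ℝ) (u : X) : ℝ≥0∞ :=
  Filter.limsup (fun v => ENNReal.ofReal ((E t u - E t v) / dist u v)) (𝓝[≠] u)

/-- The metric derivative of a curve `θ : ℝ → X` (via `limUnder`: it coincides with the
metric derivative at every point where the latter exists). -/
def mder (θ : ℝ → X) (r : ℝ) : ℝ :=
  limUnder (𝓝[≠] r) fun s => dist (θ s) (θ r) / |s - r|

/-- `θ` is absolutely continuous on `[a,b]`. -/
def IsAC (θ : ℝ → X) (a b : ℝ) : Prop :=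
  ∃ m : ℝ → ℝ, IntegrableOn m (Icc a b) ∧
    ∀ s t : ℝ, a ≤ s → s ≤ t → t ≤ b → dist (θ s) (θ t) ≤ ∫ r in s..t, m r

/-- The viscous jump dissipation cost `v(t,u₋,u₊)`. -/
def vCost (E : ℝ → X → ℝ) (t : ℝ) (um up : X) : ℝ≥0∞ :=
  ⨅ (r₀ : ℝ) (r₁ : ℝ) (θ : ℝ → X)
    (_ : r₀ ≤ r₁ ∧ IsAC θ r₀ r₁ ∧ θ r₀ = um ∧ θ r₁ = up),
    ∫⁻ r in Ioc r₀ r₁, ENNReal.ofReal (mder θ r) * max (slopeE E t (θ r)) 1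

/-- The viscously corrected distance `D_μ(x,y) = d(x,y) + (μ/2) d(x,y)²`. -/
def Dmu (μ : ℝ) (x y : X) : ℝ := dist x y + μ / 2 * dist x y ^ 2

/-- The residual stability function `R_μ(t,x) = sup_y (E(t,x) − E(t,y) − D_μ(x,y))`. -/
def Rmu (E : ℝ → X → ℝ) (μ t : ℝ) (x : X) : ℝ≥0∞ :=
  ⨆ y : X, ENNReal.ofReal (E t x - E t y - Dmu μ x y)

/-- The holes of a compact set `K ⊆ ℝ` (connected components of `[inf K, sup K] ∖ K`),
identified with the pairs of their endpoints. -/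
def holes (K : Set ℝ) : Set (ℝ × ℝ) :=
  {p | p.1 ∈ K ∧ p.2 ∈ K ∧ p.1 < p.2 ∧ Ioo p.1 p.2 ∩ K = ∅}

/-- The visco-energetic transition cost `Trc_μ(t,θ,K)`. -/
def trCost (E : ℝ → X → ℝ) (μ t : ℝ) (θ : ℝ → X) (K : Set ℝ) : ℝ≥0∞ :=
  varD θ K
    + (∑' p : ↥(holes K),
        ENNReal.ofReal (μ / 2 * dist (θ (p : ℝ × ℝ).1) (θ (p : ℝ × ℝ).2) ^ 2))
    + ∑' s : ↥(K \ {sSup K}), Rmu E μ t (θ (s : ℝ))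

/-- The visco-energetic jump dissipation cost `c_μ(t,u₋,u₊)`. -/
def veCost (E : ℝ → X → ℝ) (μ : ℝ) (t : ℝ) (um up : X) : ℝ≥0∞ :=
  ⨅ (K : Set ℝ) (θ : ℝ → X)
    (_ : K.Nonempty ∧ IsCompact K ∧ ContinuousOn θ K ∧ θ (sInf K) = um ∧ θ (sSup K) = up),
    trCost E μ t θ K

/-- The jump contribution `Jmp_{Δ_e}(u;[t₀,t₁])` of the incremental cost associated with a
jump dissipation cost `e`. -/
def jmpVar (e : ℝ → X → X → ℝ≥0∞) (u : ℝ → X) (T t₀ t₁ : ℝ) : ℝ≥0∞ :=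
  (e t₀ (u t₀) (rLim u T t₀) - edist (u t₀) (rLim u T t₀))
    + (e t₁ (lLim u t₁) (u t₁) - edist (lLim u t₁) (u t₁))
    + ∑' t : ↥(jumpSet u T ∩ Ioo t₀ t₁),
        ((e (t : ℝ) (lLim u (t : ℝ)) (u (t : ℝ)) - edist (lLim u (t : ℝ)) (u (t : ℝ)))
          + (e (t : ℝ) (u (t : ℝ)) (rLim u T (t : ℝ))
              - edist (u (t : ℝ)) (rLim u T (t : ℝ))))

/-- The augmented total variation `Var_{d,e}(u;[t₀,t₁])`. -/
def varAug (e : ℝ → X → X → ℝ≥0∞) (u : ℝ → X) (T t₀ t₁ : ℝ) : ℝ≥0∞ :=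
  varD u (Icc t₀ t₁) + jmpVar e u T t₀ t₁

/-- Condition (E1): lower semicontinuity and compactness of the sublevel sets of the
perturbed functional `F(t,u) = E(t,u) + d(x₀,u)` on `[0,T] × X`. -/
def CondE1 (E : ℝ → X → ℝ) (T : ℝ) (x₀ : X) : Prop :=
  ∀ C : ℝ,
    LowerSemicontinuousOn (fun p : ℝ × X => E p.1 p.2)
      {p : ℝ × X | p.1 ∈ Icc 0 T ∧ E p.1 p.2 + dist x₀ p.2 ≤ C} ∧
    IsCompact {p : ℝ × X | p.1 ∈ Icc 0 T ∧ E p.1 p.2 + dist x₀ p.2 ≤ C}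

/-- Condition (E2): power control for the power functional `P`, with constant `CP`. -/
def CondE2 (E P : ℝ → X → ℝ) (T : ℝ) (x₀ : X) (CP : ℝ) : Prop :=
  0 < CP ∧
    ∀ t ∈ Icc (0 : ℝ) T, ∀ u : X,
      (P t u : EReal) ≤
          Filter.liminf (fun s => (((E t u - E s u) / (t - s) : ℝ) : EReal)) (𝓝[Ico 0 t] t) ∧
        Filter.limsup (fun s => (((E s u - E t u) / (s - t) : ℝ) : EReal)) (𝓝[Ioc t T] t) ≤
          (P t u : EReal) ∧
        |P t u| ≤ CP * (E t u + dist x₀ u)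

/-- Condition (E3): conditional upper semicontinuity of the power. -/
def CondE3 (E P : ℝ → X → ℝ) (T : ℝ) : Prop :=
  ∀ (tn : ℕ → ℝ) (un : ℕ → X) (t : ℝ) (u : X),
    (∀ n, tn n ∈ Icc (0 : ℝ) T) → t ∈ Icc (0 : ℝ) T →
    Tendsto tn atTop (𝓝 t) → Tendsto un atTop (𝓝 u) →
    Tendsto (fun n => E (tn n) (un n)) atTop (𝓝 (E t u)) →
    Filter.limsup (fun n => ((P (tn n) (un n) : ℝ) : EReal)) atTop ≤ (P t u : EReal)

/-- Condition (E3'): upper semicontinuity of the power and lower semicontinuity of the slope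
along sequences with bounded energy and slope. -/
def CondE3' (E P : ℝ → X → ℝ) (T : ℝ) (x₀ : X) : Prop :=
  ∀ (tn : ℕ → ℝ) (un : ℕ → X) (t : ℝ) (u : X),
    (∀ n, tn n ∈ Icc (0 : ℝ) T) → t ∈ Icc (0 : ℝ) T →
    Tendsto tn atTop (𝓝 t) → Tendsto un atTop (𝓝 u) →
    (∃ C : ℝ, ∀ n, E 0 (un n) + dist x₀ (un n) ≤ C) →
    (∃ S : ℝ≥0∞, S ≠ ⊤ ∧ ∀ n, slopeE E (tn n) (un n) ≤ S) →
    slopeE E t u ≤ Filter.liminf (fun n => slopeE E (tn n) (un n)) atTop ∧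
      Filter.limsup (fun n => ((P (tn n) (un n) : ℝ) : EReal)) atTop ≤ (P t u : EReal)

/-- Condition (E4): the chain-rule inequality. -/
def CondE4 (E P : ℝ → X → ℝ) (T : ℝ) : Prop :=
  ∀ u : ℝ → X, IsAC u 0 T →
    IsAC (fun t => E t (u t)) 0 T ∧
      ∀ᵐ t ∂(volume.restrict (Ioo (0 : ℝ) T)),
        DifferentiableAt ℝ (fun s => E s (u s)) t ∧
          ENNReal.ofReal (P t (u t) - deriv (fun s => E s (u s)) t) ≤
            ENNReal.ofReal (mder u t) * slopeE E t (u t)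

/-- Energetic solution of the rate-independent system `(X,E,d)`. -/
def IsEnergeticSol (E P : ℝ → X → ℝ) (T : ℝ) (u : ℝ → X) : Prop :=
  varD u (Icc 0 T) ≠ ⊤ ∧
    ∀ t ∈ Icc (0 : ℝ) T,
      (∀ v : X, E t (u t) ≤ E t v + dist (u t) v) ∧
        E t (u t) + (varD u (Icc 0 t)).toReal =
          E 0 (u 0) + ∫ s in (0 : ℝ)..t, P s (u s)

/-- Balanced Viscosity solution of the rate-independent system `(X,E,d)`. -/
def IsBVSol (E P : ℝ → X → ℝ) (T : ℝ) (u : ℝ → X) : Prop :=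
  varD u (Icc 0 T) ≠ ⊤ ∧
    (∀ t ∈ Icc (0 : ℝ) T \ jumpSet u T, slopeE E t (u t) ≤ 1) ∧
    ∀ t ∈ Icc (0 : ℝ) T,
      varAug (vCost E) u T 0 t ≠ ⊤ ∧
        E t (u t) + (varAug (vCost E) u T 0 t).toReal =
          E 0 (u 0) + ∫ s in (0 : ℝ)..t, P s (u s)

/-- μ-Visco-Energetic solution of the rate-independent system `(X,E,d)`. -/
def IsVESol (E P : ℝ → X → ℝ) (T μ : ℝ) (u : ℝ → X) : Prop :=
  varD u (Icc 0 T) ≠ ⊤ ∧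
    (∀ t ∈ Icc (0 : ℝ) T \ jumpSet u T, ∀ v : X, E t (u t) ≤ E t v + Dmu μ (u t) v) ∧
    ∀ t ∈ Icc (0 : ℝ) T,
      varAug (veCost E μ) u T 0 t ≠ ⊤ ∧
        E t (u t) + (varAug (veCost E μ) u T 0 t).toReal =
          E 0 (u 0) + ∫ s in (0 : ℝ)..t, P s (u s)


lemma varD_eq (u : ℝ → X) (S : Set ℝ) : varD u S = eVariationOn u S := by
  apply le_antisymm
  · unfold varD
    refine iSup_le fun M => iSup_le fun t => iSup_le fun ht => ?_
    have hmono : MonotoneOn t (Iic M) := by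
      refine monotoneOn_of_le_succ ordConnected_Iic ?_
      intro a _ _ ha2
      exact (ht.2 a (Nat.lt_of_succ_le ha2)).le
    have := eVariationOn.sum_le_of_monotoneOn_Iic (f := u) (s := S) hmono (fun i hi => ht.1 i hi)
    refine le_trans (le_of_eq ?_) this
    exact Finset.sum_congr rfl fun i _ => edist_comm _ _
  · rw [eVariationOn.eVariationOn_eq_strictMonoOn]
    refine iSup_le fun p => ?_
    obtain ⟨n, t, h1, h2⟩ := p
    unfold varD
    refine le_iSup_of_le n (le_iSup_of_le t (le_iSup_of_le ⟨fun j hj => h2 j hj, ?_⟩ ?_))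
    · intro j hj
      exact h1 (show j ≤ n from hj.le) (show j + 1 ≤ n from hj) (Nat.lt_succ_self j)
    · exact le_of_eq (Finset.sum_congr rfl fun i _ => edist_comm _ _)

/-- variation function -/
def vfun (U : ℝ → X) (t : ℝ) : ℝ := (eVariationOn U (Iic t)).toReal

lemma vfun_ne {U : ℝ → X} (h : eVariationOn U univ ≠ ⊤) (t : ℝ) :
    eVariationOn U (Iic t) ≠ ⊤ :=
  ne_top_of_le_ne_top h (eVariationOn.mono U (subset_univ _))

lemma dist_le_vfun {U : ℝ → X} (h : eVariationOn U univ ≠ ⊤) {s t : ℝ} (hst : s ≤ t) :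
    dist (U s) (U t) ≤ vfun U t - vfun U s := by
  have h1 : eVariationOn U (Iic s) + eVariationOn U (Icc s t) ≤ eVariationOn U (Iic t) := by
    refine (eVariationOn.add_le_union U ?_).trans (eVariationOn.mono U ?_)
    · intro x hx y hy
      exact le_trans hx hy.1
    · rintro x (hx | hx)
      · exact le_trans hx hst
      · exact hx.2
  have h2 : edist (U s) (U t) ≤ eVariationOn U (Icc s t) :=
    eVariationOn.edist_le U (left_mem_Icc.2 hst) (right_mem_Icc.2 hst)
  have h3 : eVariationOn U (Icc s t) ≠ ⊤ :=
    ne_top_of_le_ne_top h (eVariationOn.mono U (subset_univ _))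
  have h4 := ENNReal.toReal_mono (vfun_ne h t) h1
  rw [ENNReal.toReal_add (vfun_ne h s) h3] at h4
  have h5 := ENNReal.toReal_mono h3 h2
  rw [← dist_edist] at h5
  unfold vfun
  linarith

lemma vfun_mono {U : ℝ → X} (h : eVariationOn U univ ≠ ⊤) : Monotone (vfun U) := by
  intro s t hst
  have := dist_le_vfun h hst
  have h2 : 0 ≤ dist (U s) (U t) := dist_nonneg
  linarith

lemma bv_countable {U : ℝ → X} (h : eVariationOn U univ ≠ ⊤) :
    {t | ¬ ContinuousAt U t}.Countable := by
  refine (vfun_mono h).countable_not_continuousAt.mono ?_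
  intro t ht hc
  apply ht
  have hc' : Tendsto (fun s => |vfun U s - vfun U t|) (𝓝 t) (𝓝 0) := by
    have h1 : Tendsto (fun s => |vfun U s - vfun U t|) (𝓝 t) (𝓝 |vfun U t - vfun U t|) :=
      (hc.tendsto.sub_const _).abs
    simpa using h1
  refine tendsto_iff_dist_tendsto_zero.2 (squeeze_zero (fun _ => dist_nonneg) ?_ hc')
  intro s
  rcases le_total s t with hst | hst
  · refine (dist_le_vfun h hst).trans ?_
    rw [abs_sub_comm]
    exact le_abs_self _
  · rw [dist_comm]
    exact (dist_le_vfun h hst).trans (le_abs_self _)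

lemma bv_measurable [MeasurableSpace X] [BorelSpace X] {U : ℝ → X}
    (h : eVariationOn U univ ≠ ⊤) : Measurable U := by
  refine measurable_of_isOpen fun O hO => ?_
  have : U ⁻¹' O = interior (U ⁻¹' O) ∪ ((U ⁻¹' O) \ interior (U ⁻¹' O)) := by
    rw [union_sdiff_cancel interior_subset]
  rw [this]
  refine isOpen_interior.measurableSet.union (Set.Countable.measurableSet ?_)
  refine (bv_countable h).mono ?_
  rintro t ⟨ht1, ht2⟩ hc
  exact ht2 (mem_interior_iff_mem_nhds.2 (hc.preimage_mem_nhds (hO.mem_nhds ht1)))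

lemma diag_subseq {Y : Type*} [MetricSpace Y] {K : Set Y} (hK : IsCompact K)
    {D : Set ℝ} (hD : D.Countable) (f : ℕ → ℝ → Y) (hf : ∀ n t, f n t ∈ K) :
    ∃ φ : ℕ → ℕ, StrictMono φ ∧ ∃ g : ℝ → Y, (∀ t ∈ D, g t ∈ K) ∧
      ∀ t ∈ D, Tendsto (fun n => f (φ n) t) atTop (𝓝 (g t)) := by
  classical
  have : Countable D := hD.to_subtype
  have hc : IsCompact (Set.pi univ (fun _ : D => K)) := isCompact_univ_pi fun _ => hK
  obtain ⟨a, ha, φ, hφ, hl⟩ := hc.tendsto_subseq (x := fun n (t : D) => f n t)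
    (fun n => fun t _ => hf n t)
  refine ⟨φ, hφ, fun t => if ht : t ∈ D then a ⟨t, ht⟩ else f 0 t, ?_, ?_⟩
  · intro t ht
    simp only [ht, dif_pos]
    exact ha ⟨t, ht⟩ (mem_univ _)
  · intro t ht
    simp only [ht, dif_pos]
    exact (tendsto_pi_nhds.1 hl) ⟨t, ht⟩

lemma helly [CompleteSpace X] {K : Set X} (hK : IsCompact K) (U : ℕ → ℝ → X) (C : ℝ)
    (hU : ∀ n t, U n t ∈ K) (hV : ∀ n, eVariationOn (U n) univ ≤ ENNReal.ofReal C) :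
    ∃ φ : ℕ → ℕ, StrictMono φ ∧ ∃ u : ℝ → X,
      ∀ t, Tendsto (fun n => U (φ n) t) atTop (𝓝 (u t)) := by
  have hne : ∀ n, eVariationOn (U n) univ ≠ ⊤ := fun n =>
    ne_top_of_le_ne_top ENNReal.ofReal_ne_top (hV n)
  set Q : Set ℝ := range ((↑) : ℚ → ℝ) with hQ
  have hVK : ∀ n t, vfun (U n) t ∈ Icc 0 (max C 0) := by
    intro n t
    refine ⟨ENNReal.toReal_nonneg, ?_⟩
    have := ENNReal.toReal_mono ENNReal.ofReal_ne_top
      ((eVariationOn.mono (U n) (subset_univ (Iic t))).trans (hV n))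
    rw [ENNReal.toReal_ofReal'] at this
    exact this
  obtain ⟨φ, hφ, W, hWK, hW⟩ := diag_subseq (isCompact_Icc) (countable_range ((↑) : ℚ → ℝ))
    (fun n => vfun (U n)) hVK
  have hWm : ∀ p q : ℚ, p ≤ q → W p ≤ W q := by
    intro p q hpq
    refine le_of_tendsto_of_tendsto' (hW p ⟨p, rfl⟩) (hW q ⟨q, rfl⟩) fun n => ?_
    exact vfun_mono (hne _) (by exact_mod_cast hpq)
  let Wh : ℝ → ℝ := fun t => sSup ((fun q : ℚ => W q) '' {q : ℚ | (q : ℝ) < t})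
  have hbdd : ∀ t, BddAbove ((fun q : ℚ => W q) '' {q : ℚ | (q : ℝ) < t}) := by
    intro t
    refine ⟨max C 0, ?_⟩
    rintro _ ⟨q, _, rfl⟩
    exact (hWK q ⟨q, rfl⟩).2
  have hWhm : Monotone Wh := by
    intro s t hst
    refine csSup_le_csSup (hbdd t) ?_ ?_
    · obtain ⟨q, hq⟩ := exists_rat_lt s
      exact ⟨_, q, hq, rfl⟩
    · exact image_mono fun q (hq : (q : ℝ) < s) => hq.trans_le hst
  have hWle : ∀ (q : ℚ) (t : ℝ), (q : ℝ) < t → W q ≤ Wh t := fun q t hq =>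
    le_csSup (hbdd t) ⟨q, hq, rfl⟩
  have hleW : ∀ (q : ℚ) (t : ℝ), t ≤ q → Wh t ≤ W q := by
    intro q t hq
    refine csSup_le ?_ ?_
    · obtain ⟨q, hq⟩ := exists_rat_lt t
      exact ⟨_, q, hq, rfl⟩
    · rintro _ ⟨p, hp, rfl⟩
      exact hWm p q (by exact_mod_cast (hp.le.trans hq))
  have hDc : (Q ∪ {t | ¬ ContinuousAt Wh t}).Countable :=
    (countable_range _).union hWhm.countable_not_continuousAt
  obtain ⟨ψ, hψ, g, -, hg⟩ := diag_subseq hK hDc (fun n => U (φ n)) (fun n t => hU _ t)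
  refine ⟨φ ∘ ψ, hφ.comp hψ, ?_⟩
  have key : ∀ t, ∃ x, Tendsto (fun n => U ((φ ∘ ψ) n) t) atTop (𝓝 x) := by
    intro t
    by_cases ht : t ∈ Q ∪ {t | ¬ ContinuousAt Wh t}
    · exact ⟨g t, hg t ht⟩
    have hct : ContinuousAt Wh t := by
      by_contra hcon
      exact ht (Or.inr hcon)
    refine cauchySeq_tendsto_of_complete ?_
    rw [Metric.cauchySeq_iff']
    intro ε hε
    obtain ⟨δ, hδ, hδ2⟩ := Metric.continuousAt_iff.1 hct (ε / 10) (by positivity)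
    obtain ⟨p, hp1, hp2⟩ := exists_rat_btwn (show t - δ / 2 < t by linarith)
    obtain ⟨q, hq1, hq2⟩ := exists_rat_btwn (show t < t + δ / 2 by linarith)
    have hpq : W q - W p < ε / 5 := by
      have h1 : W q ≤ Wh (t + δ / 2) := hWle q _ hq2
      have h2 : Wh (t - δ / 2) ≤ W p := hleW p _ hp1.le
      have h3 := hδ2 (show dist (t + δ / 2) t < δ by
        rw [Real.dist_eq]; rw [abs_of_pos] <;> linarith)
      have h4 := hδ2 (show dist (t - δ / 2) t < δ by
        rw [Real.dist_eq]; rw [abs_of_neg] <;> linarith)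
      rw [Real.dist_eq] at h3 h4
      have := abs_lt.1 h3
      have := abs_lt.1 h4
      linarith
    have h5 : Tendsto (fun n => vfun (U ((φ ∘ ψ) n)) q - vfun (U ((φ ∘ ψ) n)) p) atTop
        (𝓝 (W q - W p)) :=
      ((hW q ⟨q, rfl⟩).comp hψ.tendsto_atTop).sub ((hW p ⟨p, rfl⟩).comp hψ.tendsto_atTop)
    have h6 := h5.eventually_lt_const hpq
    have h7 := (hg p (Or.inl ⟨p, rfl⟩)).cauchySeq
    obtain ⟨N1, hN1⟩ := (Metric.cauchySeq_iff'.1 h7) (ε / 5) (by positivity)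
    obtain ⟨N2, hN2⟩ := eventually_atTop.1 h6
    have h8 : ∀ n ≥ N2, dist (U ((φ ∘ ψ) n) p) (U ((φ ∘ ψ) n) t) < ε / 5 := by
      intro n hn
      refine lt_of_le_of_lt (dist_le_vfun (hne _) hp2.le) ?_
      have := vfun_mono (hne ((φ ∘ ψ) n)) hq1.le
      have := hN2 n hn
      linarith
    refine ⟨max N1 N2, fun n hn => ?_⟩
    have a1 := h8 n ((le_max_right _ _).trans hn)
    have a2 := h8 _ (le_max_right N1 N2)
    have a3 := hN1 n ((le_max_left _ _).trans hn)
    have a4 := hN1 _ (le_max_left N1 N2)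
    simp only [Function.comp] at *
    rw [dist_comm] at a1
    set y := U (φ (ψ (max N1 N2)))
    set z := U (φ (ψ n))
    have b1 := dist_triangle (z t) (z p) (y t)
    have b2 := dist_triangle (z p) (U (φ (ψ N1)) p) (y t)
    have b3 := dist_triangle (U (φ (ψ N1)) p) (y p) (y t)
    rw [dist_comm (y p)] at a4
    linarith
  choose u hu using key
  exact ⟨u, hu⟩

section Energy

variable {E P : ℝ → X → ℝ} {T CP : ℝ} {x₀ : X}

lemma F_nonneg (hE2 : CondE2 E P T x₀ CP) {t : ℝ} (ht : t ∈ Icc (0 : ℝ) T) (x : X) :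
    0 ≤ E t x + dist x₀ x := by
  have h1 := (hE2.2 t ht x).2.2
  have h2 := (abs_nonneg _).trans h1
  exact nonneg_of_mul_nonneg_right h2 hE2.1

lemma lsc_seq (hE1 : CondE1 E T x₀) {ι : Type*} {l : Filter ι} [l.NeBot] {τ : ι → ℝ} {ξ : ι → X}
    {t : ℝ} {x : X} (hτ : Tendsto τ l (𝓝 t)) (hξ : Tendsto ξ l (𝓝 x)) {C : ℝ}
    (hC : ∀ᶠ i in l, τ i ∈ Icc (0 : ℝ) T ∧ E (τ i) (ξ i) + dist x₀ (ξ i) ≤ C) :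
    t ∈ Icc (0 : ℝ) T ∧ E t x + dist x₀ x ≤ C ∧
      ∀ a < E t x, ∀ᶠ i in l, a < E (τ i) (ξ i) := by
  obtain ⟨hl, hc⟩ := hE1 C
  have hmem : ((t, x) : ℝ × X) ∈ {p : ℝ × X | p.1 ∈ Icc 0 T ∧ E p.1 p.2 + dist x₀ p.2 ≤ C} :=
    hc.isClosed.mem_of_tendsto (hτ.prodMk_nhds hξ) hC
  refine ⟨hmem.1, hmem.2, fun a ha => ?_⟩
  have h1 := hl (t, x) hmem a ha
  have h2 : Tendsto (fun i => (τ i, ξ i)) l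
      (𝓝[{p : ℝ × X | p.1 ∈ Icc 0 T ∧ E p.1 p.2 + dist x₀ p.2 ≤ C}] (t, x)) :=
    tendsto_nhdsWithin_iff.2 ⟨hτ.prodMk_nhds hξ, hC⟩
  exact h2.eventually h1

lemma right_ev (hE2 : CondE2 E P T x₀ CP) {t : ℝ} (ht : t ∈ Icc (0 : ℝ) T) (x : X) {r : ℝ}
    (hr : P t x < r) : ∀ᶠ s in 𝓝[Ioc t T] t, E s x - E t x < r * (s - t) := by
  have h1 := (hE2.2 t ht x).2.1
  have h2 : Filter.limsup (fun s => (((E s x - E t x) / (s - t) : ℝ) : EReal)) (𝓝[Ioc t T] t)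
      < (r : EReal) := lt_of_le_of_lt h1 (by exact_mod_cast hr)
  filter_upwards [eventually_lt_of_limsup_lt h2, self_mem_nhdsWithin] with s hs hs2
  have hs' : (E s x - E t x) / (s - t) < r := by exact_mod_cast hs
  rwa [div_lt_iff₀ (sub_pos.2 hs2.1)] at hs'

lemma left_ev (hE2 : CondE2 E P T x₀ CP) {t : ℝ} (ht : t ∈ Icc (0 : ℝ) T) (x : X) {r : ℝ}
    (hr : r < P t x) : ∀ᶠ s in 𝓝[Ico 0 t] t, r * (t - s) < E t x - E s x := by
  have h1 := (hE2.2 t ht x).1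
  have h2 : (r : EReal) < Filter.liminf
      (fun s => (((E t x - E s x) / (t - s) : ℝ) : EReal)) (𝓝[Ico 0 t] t) :=
    lt_of_lt_of_le (by exact_mod_cast hr) h1
  filter_upwards [eventually_lt_of_lt_liminf h2, self_mem_nhdsWithin] with s hs hs2
  have hs' : r < (E t x - E s x) / (t - s) := by exact_mod_cast hs
  rwa [lt_div_iff₀ (sub_pos.2 hs2.2)] at hs'

lemma E_cont (hE1 : CondE1 E T x₀) (hE2 : CondE2 E P T x₀ CP) {t : ℝ} (ht : t ∈ Icc (0 : ℝ) T)
    (x : X) : ContinuousWithinAt (fun s => E s x) (Icc 0 T) t := by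
  have husc : ∀ a > E t x, ∀ᶠ s in 𝓝[Icc 0 T] t, E s x < a := by
    intro a ha
    have hsub : Icc 0 T ⊆ Ico 0 t ∪ ({t} ∪ Ioc t T) := by
      intro s hs
      rcases lt_trichotomy s t with h | h | h
      · exact Or.inl ⟨hs.1, h⟩
      · exact Or.inr (Or.inl h)
      · exact Or.inr (Or.inr ⟨h, hs.2⟩)
    have key : ∀ᶠ s in 𝓝[Ico 0 t ∪ ({t} ∪ Ioc t T)] t, E s x < a := by
      rw [nhdsWithin_union, nhdsWithin_union, eventually_sup, eventually_sup]
      have hs : ∀ r : ℝ, ∀ᶠ s in 𝓝 t, E t x + r * (s - t) < a := by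
        intro r
        have : ContinuousAt (fun s => E t x + r * (s - t)) t := by fun_prop
        have h2 : (fun s => E t x + r * (s - t)) t < a := by simpa using ha
        exact this.eventually_lt_const h2
      refine ⟨?_, ?_, ?_⟩
      · filter_upwards [left_ev hE2 ht x (sub_one_lt (P t x)),
          nhdsWithin_le_nhds (hs (P t x - 1))] with s h1 h2
        linarith
      · simpa [nhdsWithin_singleton] using ha
      · filter_upwards [right_ev hE2 ht x (lt_add_one (P t x)),
          nhdsWithin_le_nhds (hs (P t x + 1))] with s h1 h2
        linarith
    exact nhdsWithin_mono t hsub key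
  have : (𝓝[Icc 0 T] t).NeBot := mem_closure_iff_nhdsWithin_neBot.1 (subset_closure ht)
  have hlsc := (lsc_seq hE1 (l := 𝓝[Icc 0 T] t) (τ := fun s => s) (ξ := fun _ => x)
    (t := t) (x := x) nhdsWithin_le_nhds tendsto_const_nhds (C := E t x + 1 + dist x₀ x) (by
      filter_upwards [husc (E t x + 1) (by linarith), self_mem_nhdsWithin] with s h1 h2
      exact ⟨h2, by linarith⟩)).2.2
  exact tendsto_order.2 ⟨hlsc, husc⟩

lemma F_back (hE1 : CondE1 E T x₀) (hE2 : CondE2 E P T x₀ CP) {s t : ℝ}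
    (hs : 0 ≤ s) (hst : s ≤ t) (htT : t ≤ T) (x : X) :
    E s x + dist x₀ x ≤ (E t x + dist x₀ x) * Real.exp (CP * (t - s)) := by
  have h0t : 0 ≤ t := hs.trans hst
  have hG := le_gronwallBound_of_liminf_deriv_right_le
    (f := fun τ => E (t - τ) x + dist x₀ x) (f' := fun τ => CP * (E (t - τ) x + dist x₀ x))
    (δ := E t x + dist x₀ x) (K := CP) (ε := 0) (a := 0) (b := t - s) ?_ ?_ ?_ ?_
    (t - s) ⟨by linarith, le_rfl⟩
  · rw [gronwallBound_ε0] at hG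
    simpa using hG
  · refine ContinuousOn.add ?_ continuousOn_const
    intro τ hτ
    have h1 : t - τ ∈ Icc (0 : ℝ) T := ⟨by linarith [hτ.2], by linarith [hτ.1]⟩
    refine (E_cont hE1 hE2 h1 x).comp (t := Icc 0 T) (f := fun τ => t - τ) (by fun_prop) ?_
    intro σ hσ
    exact ⟨by linarith [hσ.2], by linarith [hσ.1]⟩
  · intro τ hτ r hr
    have h1 : t - τ ∈ Icc (0 : ℝ) T := ⟨by linarith [hτ.2], by linarith [hτ.1]⟩
    have hP : -r < P (t - τ) x := by
      have := (hE2.2 (t - τ) h1 x).2.2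
      have := neg_abs_le (P (t - τ) x)
      linarith
    have hev := left_ev hE2 h1 x hP
    have htend : Tendsto (fun z => t - z) (𝓝[Ioo τ (t - s)] τ) (𝓝[Ico 0 (t - τ)] (t - τ)) := by
      refine tendsto_nhdsWithin_iff.2 ⟨?_, ?_⟩
      · exact (Continuous.tendsto (by fun_prop : Continuous fun z : ℝ => t - z) τ).mono_left
          nhdsWithin_le_nhds
      · filter_upwards [self_mem_nhdsWithin] with z hz
        exact ⟨by linarith [hz.2], by linarith [hz.1]⟩
    rw [nhdsWithin_Ioo_eq_nhdsGT hτ.2] at htend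
    have hfin := htend.eventually hev
    refine Eventually.frequently ?_
    filter_upwards [hfin, self_mem_nhdsWithin] with z hz hz2
    have hpos : 0 < z - τ := sub_pos.2 hz2
    rw [inv_mul_lt_iff₀ hpos]
    linarith
  · simp
  · intro τ hτ
    simp

lemma E_lip (hE1 : CondE1 E T x₀) (hE2 : CondE2 E P T x₀ CP) {s t : ℝ}
    (hs : 0 ≤ s) (hst : s ≤ t) (htT : t ≤ T) (x : X) {C : ℝ} (hC : E t x + dist x₀ x ≤ C) :
    E s x - E t x ≤ C * CP * Real.exp (CP * T) * (t - s) := by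
  have h1 := F_back hE1 hE2 hs hst htT x
  have h0 := F_nonneg hE2 (x := x) (⟨hs.trans hst, htT⟩ : t ∈ Icc 0 T)
  have hCP := hE2.1
  set a := CP * (t - s) with ha
  have ha0 : 0 ≤ a := by have := sub_nonneg.2 hst; positivity
  have haT : a ≤ CP * T := by
    rw [ha]; exact mul_le_mul_of_nonneg_left (by linarith) hCP.le
  have h2 : Real.exp a - 1 ≤ a * Real.exp a := by
    have h3 := Real.add_one_le_exp (-a)
    have h4 : Real.exp (-a) * Real.exp a = 1 := by rw [← Real.exp_add]; simp
    nlinarith [Real.exp_pos a]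
  have h5 : a * Real.exp a ≤ a * Real.exp (CP * T) :=
    mul_le_mul_of_nonneg_left (Real.exp_le_exp.2 haT) ha0
  have h6 : (E t x + dist x₀ x) * (Real.exp a - 1) ≤ C * (a * Real.exp (CP * T)) := by
    have : 0 ≤ a * Real.exp (CP * T) := by positivity
    exact mul_le_mul hC (h2.trans h5) (by linarith [Real.one_le_exp ha0]) (h0.trans hC)
  have : C * CP * Real.exp (CP * T) * (t - s) = C * (a * Real.exp (CP * T)) := by
    rw [ha]; ring
  rw [this]
  linarith

lemma second_countable (hT : 0 ≤ T) (hE1 : CondE1 E T x₀) : SecondCountableTopology X := by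
  have h1 : (univ : Set X) ⊆ ⋃ n : ℕ,
      Prod.snd '' {p : ℝ × X | p.1 ∈ Icc 0 T ∧ E p.1 p.2 + dist x₀ p.2 ≤ n} := by
    intro x _
    obtain ⟨n, hn⟩ := exists_nat_ge (E 0 x + dist x₀ x)
    exact mem_iUnion.2 ⟨n, (0, x), ⟨⟨le_rfl, hT⟩, hn⟩, rfl⟩
  have h2 : TopologicalSpace.IsSeparable (univ : Set X) := by
    refine TopologicalSpace.IsSeparable.mono (TopologicalSpace.IsSeparable.iUnion fun n => ?_) h1
    exact ((hE1 n).2.image continuous_snd).isSeparable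
  have := TopologicalSpace.isSeparable_univ_iff.1 h2
  exact UniformSpace.secondCountable_of_separable X

lemma E_le_closed (hE1 : CondE1 E T x₀) (c : ℝ) :
    IsClosed {p : ℝ × X | p.1 ∈ Icc 0 T ∧ E p.1 p.2 ≤ c} := by
  rw [← isSeqClosed_iff_isClosed]
  intro f p hf hp
  have h1 : Tendsto (fun n => (f n).1) atTop (𝓝 p.1) := (continuous_fst.tendsto p).comp hp
  have h2 : Tendsto (fun n => (f n).2) atTop (𝓝 p.2) := (continuous_snd.tendsto p).comp hp
  have h3 : Tendsto (fun n => dist x₀ (f n).2) atTop (𝓝 (dist x₀ p.2)) :=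
    tendsto_const_nhds.dist h2
  have h4 := h3.eventually_lt_const (lt_add_one (dist x₀ p.2))
  obtain ⟨a1, a2, a3⟩ := lsc_seq hE1 h1 h2 (C := c + (dist x₀ p.2 + 1)) (by
    filter_upwards [h4] with n hn
    exact ⟨(hf n).1, by linarith [(hf n).2]⟩)
  refine ⟨a1, ?_⟩
  by_contra hcon
  obtain ⟨n, hn⟩ := (a3 c (not_le.1 hcon)).exists
  exact absurd (hf n).2 (not_le.2 hn)

lemma P_meas [MeasurableSpace X] [BorelSpace X] (hT : 0 ≤ T) (hE1 : CondE1 E T x₀)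
    (hE3 : CondE3 E P T) {c : ℝ → ℝ} {U : ℝ → X} (hc : Measurable c)
    (hcT : ∀ s, c s ∈ Icc 0 T) (hU : Measurable U) : Measurable (fun s => P (c s) (U s)) := by
  have := second_countable hT hE1
  have he : Measurable (fun s => E (c s) (U s)) := by
    refine measurable_of_Iic fun a => ?_
    have := (hc.prodMk hU) (E_le_closed hE1 a).measurableSet
    convert this using 1
    ext s
    simp only [mem_preimage, mem_Iic, mem_ofPred_eq]
    exact ⟨fun h => ⟨hcT s, h⟩, fun h => h.2⟩
  have hg : Measurable (fun s => (c s, U s, E (c s) (U s))) := hc.prodMk (hU.prodMk he)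
  refine measurable_of_Ici fun a => ?_
  set G : Set (ℝ × X × ℝ) := (fun p : ℝ × X => (p.1, p.2, E p.1 p.2)) ''
    {p : ℝ × X | p.1 ∈ Icc 0 T ∧ a ≤ P p.1 p.2} with hG
  have := hg (isClosed_closure (s := G)).measurableSet
  convert this using 1
  ext s
  simp only [mem_preimage, mem_Ici]
  constructor
  · intro h
    exact subset_closure ⟨(c s, U s), ⟨hcT s, h⟩, rfl⟩
  · intro h
    obtain ⟨y, hy, hlim⟩ := mem_closure_iff_seq_limit.1 h
    choose p hp hpy using hy
    have hl : Tendsto (fun n => ((p n).1, (p n).2, E (p n).1 (p n).2)) atTop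
        (𝓝 (c s, U s, E (c s) (U s))) := by
      refine hlim.congr fun n => ?_
      exact (hpy n).symm
    have l1 : Tendsto (fun n => (p n).1) atTop (𝓝 (c s)) :=
      (continuous_fst.tendsto _).comp hl
    have l2 : Tendsto (fun n => (p n).2) atTop (𝓝 (U s)) :=
      ((continuous_fst.comp continuous_snd).tendsto _).comp hl
    have l3 : Tendsto (fun n => E (p n).1 (p n).2) atTop (𝓝 (E (c s) (U s))) :=
      ((continuous_snd.comp continuous_snd).tendsto _).comp hl
    have h5 := hE3 _ _ _ _ (fun n => (hp n).1) (hcT s) l1 l2 l3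
    have h6 : (a : EReal) ≤ Filter.limsup (fun n => ((P (p n).1 (p n).2 : ℝ) : EReal)) atTop := by
      refine le_limsup_of_frequently_le ?_
      exact Frequently.of_forall fun n => by exact_mod_cast (hp n).2
    exact_mod_cast h6.trans h5

end Energy

section Curves

variable {E P : ℝ → X → ℝ} {T CP : ℝ} {x₀ : X}

/-- projection on `[0,T]` -/
def clampT (T s : ℝ) : ℝ := max 0 (min s T)

lemma clampT_mem (hT : 0 ≤ T) (s : ℝ) : clampT T s ∈ Icc 0 T :=
  ⟨le_max_left _ _, max_le hT (min_le_right _ _)⟩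

lemma clampT_of_mem {s : ℝ} (hs : s ∈ Icc 0 T) : clampT T s = s := by
  unfold clampT
  rw [min_eq_left hs.2, max_eq_right hs.1]

lemma clampT_var (hT : 0 ≤ T) (u : ℝ → X) :
    eVariationOn (u ∘ clampT T) univ ≤ eVariationOn u (Icc 0 T) := by
  refine eVariationOn.comp_le_of_monotoneOn u _ ?_ fun s _ => clampT_mem hT s
  intro a _ b _ hab
  exact max_le_max le_rfl (min_le_min hab le_rfl)

lemma clampT_meas : Measurable (clampT T) := by
  have : Continuous (clampT T) := by unfold clampT; fun_prop
  exact this.measurable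

lemma P_integrable (hT : 0 ≤ T) (hE1 : CondE1 E T x₀) (hE2 : CondE2 E P T x₀ CP)
    (hE3 : CondE3 E P T) {u : ℝ → X} (hu : eVariationOn u (Icc 0 T) ≠ ⊤) {t C : ℝ}
    (ht : t ∈ Icc 0 T) (hC : ∀ s ∈ Icc 0 t, E s (u s) + dist x₀ (u s) ≤ C) :
    IntervalIntegrable (fun s => P s (u s)) volume 0 t := by
  borelize X
  have hm : Measurable (fun s => P (clampT T s) ((u ∘ clampT T) s)) :=
    P_meas hT hE1 hE3 clampT_meas (clampT_mem hT)
      (bv_measurable (ne_top_of_le_ne_top hu (clampT_var hT u)))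
  rw [intervalIntegrable_iff_integrableOn_Ioc_of_le ht.1]
  have heq : ∀ s ∈ Ioc 0 t, P (clampT T s) ((u ∘ clampT T) s) = P s (u s) := by
    intro s hs
    have : clampT T s = s := clampT_of_mem ⟨hs.1.le, hs.2.trans ht.2⟩
    simp only [Function.comp, this]
  refine IntegrableOn.congr_fun ?_ heq measurableSet_Ioc
  refine IntegrableOn.of_bound (by simp) hm.aestronglyMeasurable (CP * C) ?_
  filter_upwards [ae_restrict_mem measurableSet_Ioc] with s hs
  rw [heq s hs]
  have h1 := (hE2.2 s ⟨hs.1.le, hs.2.trans ht.2⟩ (u s)).2.2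
  refine h1.trans (mul_le_mul_of_nonneg_left (hC s ⟨hs.1.le, hs.2⟩) hE2.1.le)

lemma jump_countable (hT : 0 ≤ T) {u : ℝ → X} (hu : eVariationOn u (Icc 0 T) ≠ ⊤) :
    (jumpSet u T ∩ Ioo 0 T).Countable := by
  refine (bv_countable (ne_top_of_le_ne_top hu (clampT_var hT u))).mono ?_
  rintro t ⟨ht1, ht2⟩ hc
  have hc' : ContinuousAt u t := by
    refine hc.congr ?_
    filter_upwards [Ioo_mem_nhds ht2.1 ht2.2] with s hs
    simp [Function.comp, clampT_of_mem (Ioo_subset_Icc_self hs)]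
  rcases ht1.2 with h | h
  · apply h
    unfold lLim
    rw [if_neg (not_le.2 ht2.1)]
    exact hc'.continuousWithinAt.leftLim_eq
  · apply h
    unfold rLim
    rw [if_neg (not_le.2 ht2.2)]
    exact hc'.continuousWithinAt.rightLim_eq

lemma veCost_self (μ t : ℝ) (x : X) : veCost E μ t x x = 0 := by
  refine le_antisymm ?_ bot_le
  unfold veCost
  refine iInf_le_of_le {0} (iInf_le_of_le (fun _ => x) (iInf_le_of_le ?_ ?_))
  · exact ⟨singleton_nonempty _, isCompact_singleton, continuousOn_const, rfl, rfl⟩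
  · unfold trCost
    have h1 : varD (fun _ : ℝ => x) {0} = 0 := by
      rw [varD_eq]
      exact eVariationOn.subsingleton _ subsingleton_singleton
    have h2 : IsEmpty ↥(({0} : Set ℝ) \ {sSup {0}}) := by
      simp
    have h3 : ∑' s : ↥(({0} : Set ℝ) \ {sSup {0}}), Rmu E μ t ((fun _ : ℝ => x) (s : ℝ)) = 0 :=
      tsum_empty
    rw [h1, h3]
    simp

lemma aug_mono (hT : 0 ≤ T) {μ : ℝ} {u : ℝ → X} {s t : ℝ} (hs : 0 < s) (hst : s < t) (htT : t ≤ T)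
    (hJ : s ∉ jumpSet u T) :
    varAug (veCost E μ) u T 0 s + eVariationOn u (Icc s t) ≤ varAug (veCost E μ) u T 0 t := by
  have hl : lLim u s = u s := by
    by_contra hcon
    exact hJ ⟨⟨hs.le, hst.le.trans htT⟩, Or.inl hcon⟩
  have h1 : jmpVar (veCost E μ) u T 0 s ≤ jmpVar (veCost E μ) u T 0 t := by
    unfold jmpVar
    rw [hl, veCost_self]
    refine add_le_add (add_le_add le_rfl ?_) ?_
    · simp
    · exact ENNReal.tsum_mono_subtype
        (fun t => (veCost E μ t (lLim u t) (u t) - edist (lLim u t) (u t))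
          + (veCost E μ t (u t) (rLim u T t) - edist (u t) (rLim u T t)))
        (inter_subset_inter_right _ (Ioo_subset_Ioo_right hst.le))
  have h2 := eVariationOn.Icc_add_Icc u (s := univ) hs.le hst.le (mem_univ s)
  simp only [univ_inter] at h2
  unfold varAug
  rw [varD_eq, varD_eq, ← h2]
  rw [add_right_comm]
  exact add_le_add le_rfl h1

lemma ve_bound0 (hT : 0 ≤ T) (hE2 : CondE2 E P T x₀ CP) {μ : ℝ} {u : ℝ → X}
    (hu : IsVESol E P T μ u) {t : ℝ} (ht : t ∈ Icc 0 T) :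
    E t (u t) + dist x₀ (u t) ≤ E 0 (u 0) + dist x₀ (u 0) + ∫ s in (0 : ℝ)..t, P s (u s) := by
  obtain ⟨h1, h2⟩ := hu.2.2 t ht
  have h3 : edist (u 0) (u t) ≤ varAug (veCost E μ) u T 0 t := by
    unfold varAug
    rw [varD_eq]
    exact le_add_right (eVariationOn.edist_le u (left_mem_Icc.2 ht.1) (right_mem_Icc.2 ht.1))
  have h4 := ENNReal.toReal_mono h1 h3
  rw [← dist_edist] at h4
  have h5 := dist_triangle x₀ (u 0) (u t)
  linarith

lemma ve_bound (hT : 0 ≤ T) (hE2 : CondE2 E P T x₀ CP) {μ : ℝ} {u : ℝ → X}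
    (hu : IsVESol E P T μ u) {t : ℝ} (ht : t ∈ Icc 0 T) :
    E t (u t) + dist x₀ (u t) ≤ 2 * (E 0 (u 0) + dist x₀ (u 0)) * Real.exp (2 * CP * T) := by
  set A := E 0 (u 0) + dist x₀ (u 0) with hA
  have hA0 : 0 ≤ A := F_nonneg hE2 ⟨le_rfl, hT⟩ _
  have hCP := hE2.1
  have hexp : 1 ≤ Real.exp (2 * CP * T) := Real.one_le_exp (by positivity)
  by_cases hI : IntervalIntegrable (fun s => P s (u s)) volume 0 t
  swap
  · have h1 := ve_bound0 hT hE2 hu ht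
    rw [intervalIntegral.integral_undef hI] at h1
    nlinarith
  set b : ℝ → ℝ := fun s => E s (u s) + dist x₀ (u s) with hb
  have hIs : ∀ s ∈ Icc 0 t, IntervalIntegrable (fun s => P s (u s)) volume 0 s := fun s hs =>
    hI.mono_set (by
      rw [uIcc_of_le hs.1, uIcc_of_le ht.1]; exact Icc_subset_Icc_right hs.2)
  have hsT : ∀ s ∈ Icc 0 t, s ∈ Icc 0 T := fun s hs => ⟨hs.1, hs.2.trans ht.2⟩
  have hb0 : ∀ s ∈ Icc 0 t, b s ≤ A + ∫ s in (0 : ℝ)..t, |P s (u s)| := by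
    intro s hs
    have h1 := ve_bound0 hT hE2 hu (hsT s hs)
    have h2 : ∫ r in (0 : ℝ)..s, P r (u r) ≤ ∫ r in (0 : ℝ)..s, |P r (u r)| :=
      intervalIntegral.integral_mono_on hs.1 (hIs s hs) (hIs s hs).abs fun r _ => le_abs_self _
    have h3 : ∫ r in (0 : ℝ)..s, |P r (u r)| ≤ ∫ r in (0 : ℝ)..t, |P r (u r)| := by
      refine intervalIntegral.integral_mono_interval le_rfl hs.1 hs.2 ?_ hI.abs
      exact Eventually.of_forall fun r => abs_nonneg _
    simp only [hb]
    linarith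
  set S : Set ℝ := (fun s => b s * Real.exp (-(2 * CP * s))) '' Icc 0 t with hS
  have hbd : BddAbove S := by
    refine ⟨A + ∫ s in (0 : ℝ)..t, |P s (u s)|, ?_⟩
    rintro _ ⟨s, hs, rfl⟩
    have h1 : Real.exp (-(2 * CP * s)) ≤ 1 := by
      rw [Real.exp_le_one_iff]
      have := mul_nonneg hCP.le hs.1
      linarith
    have h2 : 0 ≤ b s := F_nonneg hE2 (hsT s hs) _
    have := hb0 s hs
    simp only
    nlinarith [Real.exp_pos (-(2 * CP * s))]
  set M := sSup S with hM
  have hle : ∀ s ∈ Icc 0 t, b s ≤ M * Real.exp (2 * CP * s) := by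
    intro s hs
    have h1 : b s * Real.exp (-(2 * CP * s)) ≤ M := le_csSup hbd ⟨s, hs, rfl⟩
    rwa [Real.exp_neg, ← div_eq_mul_inv, div_le_iff₀ (Real.exp_pos _)] at h1
  have hM0 : 0 ≤ M := by
    have h0 : (0 : ℝ) ∈ Icc 0 t := ⟨le_rfl, ht.1⟩
    have := hle 0 h0
    have h2 : 0 ≤ b 0 := F_nonneg hE2 (hsT 0 h0) _
    simp at this
    linarith
  have hkey : ∀ s ∈ Icc 0 t, b s ≤ A + M / 2 * (Real.exp (2 * CP * s) - 1) := by
    intro s hs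
    have h1 := ve_bound0 hT hE2 hu (hsT s hs)
    have hder : ∀ r ∈ uIcc 0 s, HasDerivAt (fun r => M / 2 * Real.exp (2 * CP * r))
        (CP * M * Real.exp (2 * CP * r)) r := by
      intro r _
      have h := (((hasDerivAt_id' r).const_mul (2 * CP)).exp).const_mul (M / 2)
      refine h.congr_deriv ?_
      ring
    have hii : IntervalIntegrable (fun r => CP * M * Real.exp (2 * CP * r)) volume 0 s :=
      Continuous.intervalIntegrable (by fun_prop) _ _
    have h2 : ∫ r in (0 : ℝ)..s, P r (u r) ≤ ∫ r in (0 : ℝ)..s, CP * M * Real.exp (2 * CP * r) := by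
      refine intervalIntegral.integral_mono_on hs.1 (hIs s hs) hii fun r hr => ?_
      have hr' : r ∈ Icc 0 t := ⟨hr.1, hr.2.trans hs.2⟩
      have h3 := (hE2.2 r (hsT r hr') (u r)).2.2
      have h4 := mul_le_mul_of_nonneg_left (hle r hr') hCP.le
      have h5 := le_abs_self (P r (u r))
      simp only [hb] at h4
      linarith
    rw [intervalIntegral.integral_eq_sub_of_hasDerivAt hder hii] at h2
    simp only [mul_zero, Real.exp_zero, mul_one] at h2
    simp only [hb]
    linarith
  have hMA : M ≤ A + M / 2 := by
    refine csSup_le ⟨_, 0, ⟨le_rfl, ht.1⟩, rfl⟩ ?_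
    rintro _ ⟨s, hs, rfl⟩
    simp only
    rw [Real.exp_neg, ← div_eq_mul_inv, div_le_iff₀ (Real.exp_pos _)]
    have h1 : 1 ≤ Real.exp (2 * CP * s) := Real.one_le_exp (by have := hs.1; positivity)
    have h2 := hkey s hs
    nlinarith
  have h1 := hle t ⟨ht.1, le_rfl⟩
  have h2 : Real.exp (2 * CP * t) ≤ Real.exp (2 * CP * T) :=
    Real.exp_le_exp.2 (mul_le_mul_of_nonneg_left ht.2 (by positivity))
  have h3 : M * Real.exp (2 * CP * t) ≤ 2 * A * Real.exp (2 * CP * T) :=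
    mul_le_mul (by linarith) h2 (Real.exp_pos _).le (by linarith)
  exact h1.trans h3

lemma approx_stable (hT : 0 ≤ T) (hE1 : CondE1 E T x₀) (hE2 : CondE2 E P T x₀ CP)
    (hE3 : CondE3 E P T) {μ : ℝ} (hμ : 0 < μ) {u : ℝ → X} (hu : IsVESol E P T μ u) {C Q : ℝ}
    (hC : ∀ s ∈ Icc 0 T, E s (u s) + dist x₀ (u s) ≤ C) (hQ : ∀ s ∈ Icc 0 T, dist x₀ (u s) ≤ Q)
    {t : ℝ} (ht : t ∈ Ioc 0 T) (v : X) :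
    E t (u t) ≤ E t v + dist (u t) v + μ / 2 * (Q + dist x₀ v) ^ 2 := by
  have hv : eVariationOn u (Icc 0 T) ≠ ⊤ := by rw [← varD_eq]; exact hu.1
  have htI : t ∈ Icc 0 T := Ioc_subset_Icc_self ht
  have hcount := jump_countable hT hv
  set N : Set ℝ := Ioo 0 t ∩ (jumpSet u T ∩ Ioo 0 T)ᶜ with hN
  have hcl : t ∈ closure N := by
    have h1 : Ioo 0 t ⊆ closure N :=
      (hcount.dense_compl ℝ).open_subset_closure_inter isOpen_Ioo
    have h2 := closure_minimal h1 isClosed_closure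
    rw [closure_Ioo ht.1.ne] at h2
    exact h2 ⟨ht.1.le, le_rfl⟩
  have hnb : (𝓝[N] t).NeBot := mem_closure_iff_nhdsWithin_neBot.1 hcl
  have hlim : Tendsto (fun s => E s v + dist (u t) v + μ / 2 * (Q + dist x₀ v) ^ 2
      + CP * C * (t - s)) (𝓝[N] t) (𝓝 (E t v + dist (u t) v + μ / 2 * (Q + dist x₀ v) ^ 2
      + CP * C * (t - t))) := by
    have h1 : Tendsto (fun s => E s v) (𝓝[N] t) (𝓝 (E t v)) := by
      refine (E_cont hE1 hE2 htI v).mono_left (nhdsWithin_mono _ ?_)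
      intro s hs
      exact ⟨hs.1.1.le, hs.1.2.le.trans ht.2⟩
    have h2 : Tendsto (fun s => CP * C * (t - s)) (𝓝[N] t) (𝓝 (CP * C * (t - t))) :=
      (Continuous.tendsto (by fun_prop : Continuous fun s : ℝ => CP * C * (t - s)) t).mono_left
        nhdsWithin_le_nhds
    exact ((h1.add_const _).add_const _).add h2
  rw [sub_self, mul_zero, add_zero] at hlim
  refine ge_of_tendsto hlim ?_
  filter_upwards [self_mem_nhdsWithin] with s hs
  have hs0 : 0 < s := hs.1.1
  have hst : s < t := hs.1.2
  have hsI : s ∈ Icc 0 T := ⟨hs0.le, hst.le.trans ht.2⟩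
  have hsJ : s ∉ jumpSet u T := fun h => hs.2 ⟨h, hs0, hst.trans_le ht.2⟩
  obtain ⟨a1, a2⟩ := hu.2.2 t htI
  obtain ⟨b1, b2⟩ := hu.2.2 s hsI
  have c1 := aug_mono (E := E) (μ := μ) hT hs0 hst ht.2 hsJ
  have c2 : varAug (veCost E μ) u T 0 s + edist (u s) (u t) ≤ varAug (veCost E μ) u T 0 t :=
    le_trans (add_le_add le_rfl (eVariationOn.edist_le u (left_mem_Icc.2 hst.le)
      (right_mem_Icc.2 hst.le))) c1
  have c3 := ENNReal.toReal_mono a1 c2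
  rw [ENNReal.toReal_add b1 (edist_ne_top _ _), ← dist_edist] at c3
  have i1 := P_integrable hT hE1 hE2 hE3 hv htI
    (fun r hr => hC r ⟨hr.1, hr.2.trans ht.2⟩)
  have i2 := P_integrable hT hE1 hE2 hE3 hv hsI
    (fun r hr => hC r ⟨hr.1, hr.2.trans hsI.2⟩)
  have i3 := intervalIntegral.integral_interval_sub_left i1 i2
  have i4 : ∫ r in s..t, P r (u r) ≤ CP * C * (t - s) := by
    have h1 : ‖∫ r in s..t, P r (u r)‖ ≤ CP * C * |t - s| := by
      refine intervalIntegral.norm_integral_le_of_norm_le_const fun r hr => ?_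
      rw [uIoc_of_le hst.le] at hr
      have hrI : r ∈ Icc 0 T := ⟨hs0.le.trans hr.1.le, hr.2.trans ht.2⟩
      exact ((hE2.2 r hrI (u r)).2.2).trans
        (mul_le_mul_of_nonneg_left (hC r hrI) hE2.1.le)
    rw [abs_of_pos (sub_pos.2 hst)] at h1
    exact (le_abs_self _).trans h1
  have st := hu.2.1 s ⟨hsI, hsJ⟩ v
  unfold Dmu at st
  have d1 := dist_triangle (u s) (u t) v
  have d2 : dist (u s) v ≤ Q + dist x₀ v := by
    have := dist_triangle (u s) x₀ v
    have h2 := hQ s hsI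
    rw [dist_comm] at h2
    linarith
  have d3 : dist (u s) v ^ 2 ≤ (Q + dist x₀ v) ^ 2 :=
    pow_le_pow_left₀ dist_nonneg d2 2
  have d4 := mul_le_mul_of_nonneg_left d3 (by positivity : 0 ≤ μ / 2)
  linarith

lemma energetic_lower (hT : 0 ≤ T) (hE1 : CondE1 E T x₀) (hE2 : CondE2 E P T x₀ CP)
    (hE3 : CondE3 E P T) {u : ℝ → X} (hu : eVariationOn u (Icc 0 T) ≠ ⊤) {C : ℝ}
    (hC : ∀ s ∈ Icc 0 T, E s (u s) + dist x₀ (u s) ≤ C)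
    (hst : ∀ s ∈ Icc 0 T, ∀ v : X, E s (u s) ≤ E s v + dist (u s) v) {t : ℝ} (ht : t ∈ Icc 0 T) :
    E 0 (u 0) + ∫ s in (0 : ℝ)..t, P s (u s) ≤ E t (u t) + (eVariationOn u (Icc 0 t)).toReal := by
  set L := C * CP * Real.exp (CP * T) with hL
  set V : ℝ → ℝ := fun s => (eVariationOn u (Icc 0 s)).toReal with hV
  set h : ℝ → ℝ := fun s => E s (u s) + V s + L * s with hh
  have hVd : ∀ a b, 0 ≤ a → a ≤ b → b ≤ T → dist (u a) (u b) ≤ V b - V a := by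
    intro a b ha hab hb
    have h1 := eVariationOn.Icc_add_Icc u (s := univ) ha hab (mem_univ a)
    simp only [univ_inter] at h1
    have hf : ∀ c d, 0 ≤ c → d ≤ T → eVariationOn u (Icc c d) ≠ ⊤ := fun c d hc hd =>
      ne_top_of_le_ne_top hu (eVariationOn.mono u (Icc_subset_Icc hc hd))
    have h2 := eVariationOn.edist_le u (left_mem_Icc.2 hab) (right_mem_Icc.2 hab)
    have h3 := ENNReal.toReal_mono (hf a b ha hb) h2
    rw [← dist_edist] at h3
    simp only [hV]
    rw [← h1, ENNReal.toReal_add (hf _ _ le_rfl (hab.trans hb)) (hf _ _ ha hb)]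
    linarith
  have hinc : ∀ a b, 0 ≤ a → a ≤ b → b ≤ T →
      E b (u b) - E a (u b) + L * (b - a) ≤ h b - h a := by
    intro a b ha hab hb
    have h1 := hVd a b ha hab hb
    have h2 := hst a ⟨ha, hab.trans hb⟩ (u b)
    simp only [hh]
    linarith
  have hmono : MonotoneOn h (Icc 0 t) := by
    intro a ha b hb hab
    have h1 := hinc a b ha.1 hab (hb.2.trans ht.2)
    have h2 := E_lip hE1 hE2 ha.1 hab (hb.2.trans ht.2) (u b) (hC b ⟨hb.1, hb.2.trans ht.2⟩)
    rw [← hL] at h2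
    linarith
  have hmono' : MonotoneOn h (uIcc 0 t) := by rwa [uIcc_of_le ht.1]
  have hderiv_mem := hmono'.intervalIntegral_deriv_mem_uIcc
  rw [uIcc_of_le (sub_nonneg.2 (hmono (left_mem_Icc.2 ht.1) (right_mem_Icc.2 ht.1) ht.1))] at hderiv_mem
  have hPi := P_integrable hT hE1 hE2 hE3 hu ht (fun r hr => hC r ⟨hr.1, hr.2.trans ht.2⟩)
  have hPL : IntervalIntegrable (fun s => P s (u s) + L) volume 0 t :=
    hPi.add intervalIntegrable_const
  have hle : ∫ s in (0 : ℝ)..t, (P s (u s) + L) ≤ ∫ s in (0 : ℝ)..t, deriv h s := by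
    refine intervalIntegral.integral_mono_ae_restrict ht.1 hPL hmono'.intervalIntegrable_deriv ?_
    have hd := hmono.ae_differentiableWithinAt_of_mem
    have hne : ∀ᵐ s : ℝ, s ≠ 0 ∧ s ≠ t := by
      have h1 : ∀ c : ℝ, ∀ᵐ s : ℝ, s ≠ c := fun c => by
        simp [ae_iff]
      exact (h1 0).and (h1 t)
    rw [EventuallyLE, ae_restrict_iff' measurableSet_Icc]
    filter_upwards [hd, hne] with s hds hs hsI
    have hs0 : 0 < s := lt_of_le_of_ne hsI.1 (Ne.symm hs.1)
    have hst' : s < t := lt_of_le_of_ne hsI.2 hs.2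
    have hda : HasDerivAt h (deriv h s) s :=
      ((hds hsI).differentiableAt (Icc_mem_nhds hs0 hst')).hasDerivAt
    have hslope : Tendsto (slope h s) (𝓝[Ico 0 s] s) (𝓝 (deriv h s)) :=
      hda.tendsto_slope.mono_left (nhdsWithin_mono _ fun r hr => ne_of_lt hr.2)
    have hnb : (𝓝[Ico 0 s] s).NeBot := by
      rw [nhdsWithin_Ico_eq_nhdsLT hs0]; infer_instance
    have hsT : s ∈ Icc 0 T := ⟨hsI.1, hsI.2.trans ht.2⟩
    have key : ∀ r < P s (u s), r + L ≤ deriv h s := by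
      intro r hr
      refine ge_of_tendsto hslope ?_
      filter_upwards [left_ev hE2 hsT (u s) hr, self_mem_nhdsWithin] with σ h1 h2
      have h3 := hinc σ s h2.1 h2.2.le hsT.2
      rw [slope_comm, slope_def_field, le_div_iff₀ (sub_pos.2 h2.2)]
      linarith
    have : P s (u s) ≤ deriv h s - L := le_of_forall_lt fun r hr => by
      obtain ⟨r', h1, h2⟩ := exists_between hr
      linarith [key r' h2]
    linarith
  rw [intervalIntegral.integral_add hPi intervalIntegrable_const,
    intervalIntegral.integral_const] at hle
  have h0 : V 0 = 0 := by
    simp only [hV]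
    rw [Icc_self, eVariationOn.subsingleton _ subsingleton_singleton]
    rfl
  have hfin := hle.trans hderiv_mem.2
  simp only [hh, h0, sub_zero, smul_eq_mul] at hfin
  simp only [hV] at hfin
  linarith

lemma rev_fatou {f : ℕ → ℝ → ℝ} {g : ℝ → ℝ} {t B : ℝ} (ht : 0 ≤ t)
    (hf : ∀ n, IntervalIntegrable (f n) volume 0 t) (hg : IntervalIntegrable g volume 0 t)
    (hfB : ∀ n, ∀ s ∈ Icc 0 t, |f n s| ≤ B) (hgB : ∀ s ∈ Icc 0 t, |g s| ≤ B)
    (hlim : ∀ s ∈ Icc 0 t, Filter.limsup (fun n => ((f n s : ℝ) : EReal)) atTop ≤ (g s : EReal))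
    {δ : ℝ} (hδ : 0 < δ) :
    ∀ᶠ n in atTop, ∫ s in (0 : ℝ)..t, f n s < (∫ s in (0 : ℝ)..t, g s) + δ := by
  have hmaxI : ∀ n, IntervalIntegrable (fun s => max (f n s - g s) 0) volume 0 t := by
    intro n
    have h1 := (hf n).sub hg
    rw [intervalIntegrable_iff] at h1 ⊢
    exact h1.pos_part
  have hto : Tendsto (fun n => ∫ s in (0 : ℝ)..t, max (f n s - g s) 0) atTop
      (𝓝 (∫ s in (0 : ℝ)..t, (0 : ℝ))) := by
    refine intervalIntegral.tendsto_integral_filter_of_dominated_convergence (fun _ => 2 * B)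
      ?_ ?_ intervalIntegrable_const ?_
    · exact Eventually.of_forall fun n =>
        ((intervalIntegrable_iff.1 (hmaxI n)).aestronglyMeasurable)
    · refine Eventually.of_forall fun n => Eventually.of_forall fun s hs => ?_
      rw [uIoc_of_le ht] at hs
      have h1 := abs_le.1 (hfB n s (Ioc_subset_Icc_self hs))
      have h2 := abs_le.1 (hgB s (Ioc_subset_Icc_self hs))
      rw [Real.norm_eq_abs, abs_of_nonneg (le_max_right _ _)]
      exact max_le (by linarith) (by linarith)
    · refine Eventually.of_forall fun s hs => ?_
      rw [uIoc_of_le ht] at hs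
      have h1 := hlim s (Ioc_subset_Icc_self hs)
      refine tendsto_order.2 ⟨fun a ha => Eventually.of_forall fun n =>
        ha.trans_le (le_max_right _ _), fun a ha => ?_⟩
      have h2 : Filter.limsup (fun n => ((f n s : ℝ) : EReal)) atTop < ((g s + a : ℝ) : EReal) :=
        lt_of_le_of_lt h1 (by exact_mod_cast (by linarith : g s < g s + a))
      filter_upwards [eventually_lt_of_limsup_lt h2] with n hn
      have hn' : f n s < g s + a := by exact_mod_cast hn
      exact max_lt (by linarith) ha
  rw [intervalIntegral.integral_zero] at hto
  filter_upwards [hto.eventually_lt_const hδ] with n hn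
  have h1 : ∫ s in (0 : ℝ)..t, (f n s - g s) ≤ ∫ s in (0 : ℝ)..t, max (f n s - g s) 0 :=
    intervalIntegral.integral_mono_on ht ((hf n).sub hg) (hmaxI n) fun s _ => le_max_left _ _
  rw [intervalIntegral.integral_sub (hf n) hg] at h1
  linarith

end Curves

theorem statement8
    {X : Type*} [MetricSpace X] [CompleteSpace X]
    (T : ℝ) (hT : 0 < T) (E P : ℝ → X → ℝ) (x₀ : X) (CP : ℝ)
    (hE1 : CondE1 E T x₀) (hE2 : CondE2 E P T x₀ CP)
    (hE3 : CondE3 E P T)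
    (μ : ℕ → ℝ) (hμpos : ∀ n, 0 < μ n) (hμ : Tendsto μ atTop (𝓝 (0 : ℝ)))
    (u0 : ℕ → X) (u₀ : X)
    (hu0 : Tendsto u0 atTop (𝓝 u₀))
    (hu0E : Tendsto (fun n => E 0 (u0 n)) atTop (𝓝 (E 0 u₀)))
    (hstab : ∀ v : X, E 0 u₀ ≤ E 0 v + dist u₀ v)
    (un : ℕ → ℝ → X)
    (hsol : ∀ n, IsVESol E P T (μ n) (un n))
    (hinit : ∀ n, un n 0 = u0 n) :
    ∃ φ : ℕ → ℕ, StrictMono φ ∧ ∃ u : ℝ → X,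
      varD u (Icc 0 T) ≠ ⊤ ∧ u 0 = u₀ ∧
      (∀ t ∈ Icc (0 : ℝ) T,
        Tendsto (fun k => un (φ k) t) atTop (𝓝 (u t)) ∧
        Tendsto (fun k => E t (un (φ k) t)) atTop (𝓝 (E t (u t)))) ∧
      IsEnergeticSol E P T u := by
  have hT0 := hT.le
  have h0I : (0 : ℝ) ∈ Icc 0 T := ⟨le_rfl, hT0⟩
  have hvar : ∀ n, eVariationOn (un n) (Icc 0 T) ≠ ⊤ := fun n => by
    rw [← varD_eq]; exact (hsol n).1
  -- uniform bounds
  obtain ⟨A, hA⟩ : ∃ A, ∀ n, E 0 (un n 0) + dist x₀ (un n 0) ≤ A := by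
    have h1 : Tendsto (fun n => E 0 (u0 n) + dist x₀ (u0 n)) atTop
        (𝓝 (E 0 u₀ + dist x₀ u₀)) := hu0E.add (tendsto_const_nhds.dist hu0)
    obtain ⟨A, hA⟩ := h1.bddAbove_range
    exact ⟨A, fun n => by rw [hinit]; exact hA ⟨n, rfl⟩⟩
  set C := 2 * A * Real.exp (2 * CP * T) with hCdef
  have hC : ∀ n, ∀ s ∈ Icc 0 T, E s (un n s) + dist x₀ (un n s) ≤ C := by
    intro n s hs
    refine (ve_bound hT0 hE2 (hsol n) hs).trans ?_
    have := hA n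
    have := Real.exp_pos (2 * CP * T)
    rw [hCdef]
    exact mul_le_mul_of_nonneg_right (by linarith) this.le
  set K : Set X := Prod.snd '' {p : ℝ × X | p.1 ∈ Icc 0 T ∧ E p.1 p.2 + dist x₀ p.2 ≤ C} with hK
  have hKc : IsCompact K := (hE1 C).2.image continuous_snd
  obtain ⟨Q, hQ⟩ : ∃ Q, ∀ x ∈ K, dist x₀ x ≤ Q := by
    obtain ⟨Q, hQ⟩ := hKc.isBounded.subset_closedBall x₀
    exact ⟨Q, fun x hx => by rw [dist_comm]; exact hQ hx⟩
  have hunK : ∀ n, ∀ s ∈ Icc 0 T, un n s ∈ K := fun n s hs => ⟨(s, un n s), ⟨hs, hC n s hs⟩, rfl⟩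
  have hunQ : ∀ n, ∀ s ∈ Icc 0 T, dist x₀ (un n s) ≤ Q := fun n s hs => hQ _ (hunK n s hs)
  have hPB : ∀ n, ∀ s ∈ Icc 0 T, |P s (un n s)| ≤ CP * C := fun n s hs =>
    ((hE2.2 s hs _).2.2).trans (mul_le_mul_of_nonneg_left (hC n s hs) hE2.1.le)
  have hPi : ∀ n, ∀ t ∈ Icc 0 T, IntervalIntegrable (fun s => P s (un n s)) volume 0 t :=
    fun n t ht => P_integrable hT0 hE1 hE2 hE3 (hvar n) ht
      (fun r hr => hC n r ⟨hr.1, hr.2.trans ht.2⟩)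
  -- energy inequality along the sequence
  have hen : ∀ n, ∀ t ∈ Icc 0 T, E t (un n t) + (eVariationOn (un n) (Icc 0 t)).toReal ≤
      E 0 (un n 0) + ∫ s in (0 : ℝ)..t, P s (un n s) := by
    intro n t ht
    obtain ⟨h1, h2⟩ := (hsol n).2.2 t ht
    have h3 : eVariationOn (un n) (Icc 0 t) ≤ varAug (veCost E (μ n)) (un n) T 0 t := by
      unfold varAug
      rw [varD_eq]
      exact le_self_add
    have h4 := ENNReal.toReal_mono h1 h3
    linarith
  set B := A + CP * C * T + Q with hB
  have hvarB : ∀ n, eVariationOn (un n) (Icc 0 T) ≤ ENNReal.ofReal B := by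
    intro n
    have hTI : T ∈ Icc 0 T := ⟨hT0, le_rfl⟩
    have h1 := hen n T hTI
    have h2 : ∫ s in (0 : ℝ)..T, P s (un n s) ≤ CP * C * T := by
      have h3 : ‖∫ s in (0 : ℝ)..T, P s (un n s)‖ ≤ CP * C * |T - 0| := by
        refine intervalIntegral.norm_integral_le_of_norm_le_const fun r hr => ?_
        rw [uIoc_of_le hT0] at hr
        exact hPB n r (Ioc_subset_Icc_self hr)
      rw [sub_zero, abs_of_pos hT] at h3
      exact (le_abs_self _).trans h3
    have h4 := F_nonneg hE2 hTI (un n T)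
    have h5 := hunQ n T hTI
    have h6 := hA n
    have h7 : 0 ≤ dist x₀ (un n 0) := dist_nonneg
    rw [← ENNReal.ofReal_toReal (hvar n)]
    exact ENNReal.ofReal_le_ofReal (by rw [hB]; linarith)
  -- compactness
  obtain ⟨φ, hφ, u, hu⟩ := helly hKc (fun n => un n ∘ clampT T) B
    (fun n t => hunK n _ (clampT_mem hT0 t))
    (fun n => (clampT_var hT0 (un n)).trans (hvarB n))
  have hlim : ∀ t ∈ Icc 0 T, Tendsto (fun k => un (φ k) t) atTop (𝓝 (u t)) := by
    intro t ht
    have := hu t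
    simpa [Function.comp, clampT_of_mem ht] using this
  have hu00 : u 0 = u₀ := by
    refine tendsto_nhds_unique (hlim 0 h0I) ?_
    simp only [hinit]
    exact hu0.comp hφ.tendsto_atTop
  have huvarB : eVariationOn u (Icc 0 T) ≤ ENNReal.ofReal B := by
    by_contra hcon
    obtain ⟨k, hk⟩ := (eVariationOn.lowerSemicontinuous_aux hlim (not_le.1 hcon)).exists
    exact absurd (hvarB (φ k)) (not_le.2 hk)
  have huvar : eVariationOn u (Icc 0 T) ≠ ⊤ :=
    ne_top_of_le_ne_top ENNReal.ofReal_ne_top huvarB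
  have hlsc : ∀ t ∈ Icc 0 T, E t (u t) + dist x₀ (u t) ≤ C ∧
      ∀ a < E t (u t), ∀ᶠ k in atTop, a < E t (un (φ k) t) := by
    intro t ht
    exact (lsc_seq hE1 (l := atTop) (τ := fun _ : ℕ => t) tendsto_const_nhds (hlim t ht) (C := C)
      (Eventually.of_forall fun k => ⟨ht, hC (φ k) t ht⟩)).2
  have hμφ : Tendsto (fun k => μ (φ k)) atTop (𝓝 0) := hμ.comp hφ.tendsto_atTop
  have hup : ∀ t ∈ Ioc 0 T, ∀ v, ∀ k, E t (un (φ k) t) ≤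
      E t v + dist (un (φ k) t) v + μ (φ k) / 2 * (Q + dist x₀ v) ^ 2 := fun t ht v k =>
    approx_stable hT0 hE1 hE2 hE3 (hμpos _) (hsol _) (hC _) (hunQ _) ht v
  have hupl : ∀ t ∈ Ioc 0 T, ∀ v, Tendsto (fun k => E t v + dist (un (φ k) t) v +
      μ (φ k) / 2 * (Q + dist x₀ v) ^ 2) atTop (𝓝 (E t v + dist (u t) v)) := by
    intro t ht v
    have h1 : Tendsto (fun k => E t v + dist (un (φ k) t) v +
        μ (φ k) / 2 * (Q + dist x₀ v) ^ 2) atTop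
        (𝓝 (E t v + dist (u t) v + 0 / 2 * (Q + dist x₀ v) ^ 2)) :=
      (tendsto_const_nhds.add ((hlim t (Ioc_subset_Icc_self ht)).dist tendsto_const_nhds)).add
        ((hμφ.div_const 2).mul_const _)
    simpa using h1
  have hElim : ∀ t ∈ Icc 0 T, Tendsto (fun k => E t (un (φ k) t)) atTop (𝓝 (E t (u t))) := by
    intro t ht
    rcases eq_or_lt_of_le ht.1 with h0 | h0
    · subst h0
      simp only [hinit, hu00]
      exact hu0E.comp hφ.tendsto_atTop
    · refine tendsto_order.2 ⟨(hlsc t ht).2, fun a ha => ?_⟩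
      have h1 := hupl t ⟨h0, ht.2⟩ (u t)
      rw [dist_self, add_zero] at h1
      filter_upwards [h1.eventually_lt_const ha] with k hk
      exact (hup t ⟨h0, ht.2⟩ (u t) k).trans_lt hk
  have hstable : ∀ t ∈ Icc 0 T, ∀ v, E t (u t) ≤ E t v + dist (u t) v := by
    intro t ht v
    rcases eq_or_lt_of_le ht.1 with h0 | h0
    · subst h0
      rw [hu00]
      exact hstab v
    · exact le_of_tendsto_of_tendsto' (hElim t ht) (hupl t ⟨h0, ht.2⟩ v)
        (hup t ⟨h0, ht.2⟩ v)
  have huC : ∀ s ∈ Icc 0 T, E s (u s) + dist x₀ (u s) ≤ C := fun s hs => (hlsc s hs).1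
  have hupper : ∀ t ∈ Icc 0 T, E t (u t) + (eVariationOn u (Icc 0 t)).toReal ≤
      E 0 (u 0) + ∫ s in (0 : ℝ)..t, P s (u s) := by
    intro t ht
    have hsub : Icc 0 t ⊆ Icc 0 T := Icc_subset_Icc_right ht.2
    have hvt : eVariationOn u (Icc 0 t) ≠ ⊤ :=
      ne_top_of_le_ne_top huvar (eVariationOn.mono u hsub)
    refine le_of_forall_pos_le_add fun δ hδ => ?_
    have e1 := rev_fatou (f := fun k s => P s (un (φ k) s)) (g := fun s => P s (u s))
      (B := CP * C) ht.1 (fun k => hPi (φ k) t ht)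
      (P_integrable hT0 hE1 hE2 hE3 huvar ht (fun r hr => huC r (hsub hr)))
      (fun k s hs => hPB (φ k) s (hsub hs))
      (fun s hs => ((hE2.2 s (hsub hs) _).2.2).trans
        (mul_le_mul_of_nonneg_left (huC s (hsub hs)) hE2.1.le))
      (fun s hs => hE3 (fun _ => s) (fun k => un (φ k) s) s (u s) (fun _ => hsub hs) (hsub hs)
        tendsto_const_nhds (hlim s (hsub hs)) (hElim s (hsub hs)))
      (show 0 < δ / 4 by positivity)
    have e2 := (hElim t ht).eventually_const_lt (show E t (u t) - δ / 4 < E t (u t) by linarith)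
    have e3 := (hElim 0 h0I).eventually_lt_const (show E 0 (u 0) < E 0 (u 0) + δ / 4 by linarith)
    have e4 : ∀ᶠ k in atTop, (eVariationOn u (Icc 0 t)).toReal - δ / 4 ≤
        (eVariationOn (un (φ k)) (Icc 0 t)).toReal := by
      by_cases hz : (eVariationOn u (Icc 0 t)).toReal - δ / 4 ≤ 0
      · exact Eventually.of_forall fun k => hz.trans ENNReal.toReal_nonneg
      · have hlt : ENNReal.ofReal ((eVariationOn u (Icc 0 t)).toReal - δ / 4) <
            eVariationOn u (Icc 0 t) := by
          rw [ENNReal.ofReal_lt_iff_lt_toReal (not_le.1 hz).le hvt]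
          linarith
        filter_upwards [eVariationOn.lowerSemicontinuous_aux
          (fun s hs => hlim s (hsub hs)) hlt] with k hk
        have hne : eVariationOn (un (φ k)) (Icc 0 t) ≠ ⊤ :=
          ne_top_of_le_ne_top (hvar (φ k)) (eVariationOn.mono _ hsub)
        exact ((ENNReal.ofReal_lt_iff_lt_toReal (not_le.1 hz).le hne).1 hk).le
    obtain ⟨k, k1, k2, k3, k4⟩ := (e1.and (e2.and (e3.and e4))).exists
    have := hen (φ k) t ht
    linarith
  have huvar' : varD u (Icc 0 T) ≠ ⊤ := by rw [varD_eq]; exact huvar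
  refine ⟨φ, hφ, u, huvar', hu00, fun t ht => ⟨hlim t ht, hElim t ht⟩, huvar', fun t ht =>
    ⟨hstable t ht, ?_⟩⟩
  rw [varD_eq]
  exact le_antisymm (hupper t ht) (energetic_lower hT0 hE1 hE2 hE3 huvar huC hstable ht)

end
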